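/- arXiv:2009.06735 — 5 statements merged into one kernel-verified Lean document; each statement's English description precedes it below -/
import Mathlib

section
/- Let q, k, s, S be positive integers with s ∣ k and s ∣ S, and let w : Fin S → Fin k → Fin s be strongly uniform, i.e. for every t < S and every a < s the number of indices i < k with w(t)(i) = a is exactly k/s. Then there exists a bijection φ : Fin k × Fin S ≃ Fin k × Fin S such that for every pair (i, t), the rectangle R(φ(i,t)) is contained in [0, 1/q) × [w(t)(i)/s, (w(t)(i)+1)/s). (This is the permutation h_{n+1} of the atoms of the partition I_{kq} ⊗ I_S restricted to [0,1/q) × [0,1) sending each atom into the horizontal strip determined by the corresponding letter of the corresponding word.) -/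
/-!
Write `S = s * m`. Colour the atom `(i, t)` by its letter `w t i`, and colour the target atom `(j, u)`
by the index `u / m` of the horizontal strip of height `1 / s` that contains it. Strong uniformity
gives every letter `S * (k / s)` source atoms, and every strip contains `k * m` target atoms; these
numbers agree, so a bijection matching the two colourings exists (`exists_equiv_of_card_fiber_eq`).
Its horizontal behaviour is irrelevant, since all atoms lie over `[0, 1/q)`.
-/

/-- Two colourings of finite types with equally large colour classes differ by a bijection. -/
theorem exists_equiv_of_card_fiber_eq {α β γ : Type*} [Fintype α] [Fintype β] [DecidableEq γ]
    (f : α → γ) (g : β → γ)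
    (h : ∀ c, (Finset.univ.filter (fun a => f a = c)).card
      = (Finset.univ.filter (fun b => g b = c)).card) :
    ∃ φ : α ≃ β, ∀ a, g (φ a) = f a := by
  have e : ∀ c, Nonempty ({a // f a = c} ≃ {b // g b = c}) := fun c =>
    Fintype.card_eq.mp (by rw [Fintype.card_subtype, Fintype.card_subtype, h c])
  exact ⟨Equiv.ofFiberEquiv fun c => (e c).some, fun a => Equiv.ofFiberEquiv_map _ a⟩

theorem card_letter_class {k s S : ℕ} (w : Fin S → Fin k → Fin s)
    (hw : ∀ (t : Fin S) (a : Fin s),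
      (Finset.univ.filter (fun i : Fin k => w t i = a)).card = k / s) (a : Fin s) :
    (Finset.univ.filter (fun p : Fin k × Fin S => w p.2 p.1 = a)).card = S * (k / s) := by
  simp only [Finset.card_filter] at hw ⊢
  rw [Fintype.sum_prod_type_right]
  simp [hw]

theorem card_strip_class (k s m : ℕ) (a : Fin s) :
    (Finset.univ.filter (fun p : Fin k × Fin (s * m) => p.2.divNat = a)).card = k * m := by
  have key : ∑ u : Fin (s * m), (if u.divNat = a then 1 else 0) = m := by
    rw [← Equiv.sum_comp finProdFinEquiv, Fintype.sum_prod_type]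
    have h : ∀ x : Fin s × Fin m, (finProdFinEquiv x).divNat = x.1 := fun x =>
      congrArg Prod.fst (finProdFinEquiv.symm_apply_apply x)
    simp [h]
  rw [Finset.card_filter, Fintype.sum_prod_type]
  simp only [key]
  simp

/-- A cell of width `1 / (s * m)` lies in the cell of width `1 / s` whose index is the quotient. -/
theorem Ico_cell_subset {s m u : ℕ} (hs : 0 < s) (hm : 0 < m) :
    Set.Ico ((u : ℝ) / ((s * m : ℕ) : ℝ)) (((u : ℝ) + 1) / ((s * m : ℕ) : ℝ)) ⊆
      Set.Ico (((u / m : ℕ) : ℝ) / (s : ℝ)) ((((u / m : ℕ) : ℝ) + 1) / (s : ℝ)) := by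
  have hs' : (0 : ℝ) < s := by exact_mod_cast hs
  have hm' : (0 : ℝ) < m := by exact_mod_cast hm
  have h1 : ((u / m : ℕ) : ℝ) * m ≤ u := by exact_mod_cast Nat.div_mul_le_self u m
  have h2 : (u : ℝ) + 1 ≤ (((u / m : ℕ) : ℝ) + 1) * m := by
    exact_mod_cast (Nat.lt_mul_of_div_lt (Nat.lt_succ_self (u / m)) hm : u < (u / m + 1) * m)
  rw [Nat.cast_mul]
  apply Set.Ico_subset_Ico
  · rw [div_le_div_iff₀ hs' (by positivity)]
    nlinarith
  · rw [div_le_div_iff₀ (by positivity) hs']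
    nlinarith

/-- existence of the permutation `h_{n+1}` of the atoms of the partition
`I_{kq} ⊗ I_S` restricted to `[0,1/q) × [0,1)` sending each atom into the horizontal
strip determined by the corresponding letter of the corresponding word. -/
theorem stmt_0 (q k s S : ℕ) (hq : 0 < q) (hk : 0 < k) (hs : 0 < s) (hS : 0 < S)
    (hsk : s ∣ k) (hsS : s ∣ S)
    (w : Fin S → Fin k → Fin s)
    (hw : ∀ (t : Fin S) (a : Fin s),
      (Finset.univ.filter (fun i : Fin k => w t i = a)).card = k / s) :
    ∃ φ : Fin k × Fin S ≃ Fin k × Fin S,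
      ∀ (i : Fin k) (t : Fin S),
        (Set.Ico ((((φ (i, t)).1 : ℕ) : ℝ) / ((k : ℝ) * (q : ℝ)))
            (((((φ (i, t)).1 : ℕ) : ℝ) + 1) / ((k : ℝ) * (q : ℝ))) ×ˢ
          Set.Ico ((((φ (i, t)).2 : ℕ) : ℝ) / (S : ℝ))
            (((((φ (i, t)).2 : ℕ) : ℝ) + 1) / (S : ℝ))) ⊆
        (Set.Ico (0 : ℝ) (1 / (q : ℝ)) ×ˢ
          Set.Ico (((w t i : ℕ) : ℝ) / (s : ℝ)) ((((w t i : ℕ) : ℝ) + 1) / (s : ℝ))) := by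
  obtain ⟨m, rfl⟩ := hsS
  obtain ⟨l, rfl⟩ := hsk
  have hm : 0 < m := Nat.pos_of_mul_pos_left hS
  obtain ⟨φ, hφ⟩ := exists_equiv_of_card_fiber_eq
    (fun p : Fin (s * l) × Fin (s * m) => w p.2 p.1)
    (fun p : Fin (s * l) × Fin (s * m) => p.2.divNat) (fun a => by
      rw [card_letter_class w hw a, card_strip_class, Nat.mul_div_cancel_left l hs]
      ring)
  refine ⟨φ, fun i t => Set.prod_mono ?_ ?_⟩
  · have hq' : (0 : ℝ) < q := by exact_mod_cast hq
    have hk' : (0 : ℝ) < ((s * l : ℕ) : ℝ) := by exact_mod_cast hk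
    have hj : (((φ (i, t)).1 : ℕ) : ℝ) + 1 ≤ ((s * l : ℕ) : ℝ) := by
      exact_mod_cast (φ (i, t)).1.isLt
    apply Set.Ico_subset_Ico (by positivity)
    rw [div_le_div_iff₀ (by positivity) hq']
    nlinarith
  · have h : (((φ (i, t)).2 : ℕ) / m) = (w t i : ℕ) := congrArg Fin.val (hφ (i, t))
    rw [← h]
    exact Ico_cell_subset hs hm
end

section
/- Let k, k', l, l' : ℕ → ℕ satisfy k_n ≥ 2, k'_n ≥ 2, l_n ≥ 1, l'_n ≥ 1 for all n, together with k'_0 < k_0 and, for all n, k'_n ≤ k_n and l'_n ≤ l_n. Define q and q' from (k,l) and (k',l') respectively by the recursion q_0 = 1, q_{n+1} = k_n · l_n · q_n². Then both series Σ_{n≥1} 1/q_n and Σ_{n≥1} 1/q'_n converge, and their sums α = Σ_{n≥1} 1/q_n and α' = Σ_{n≥1} 1/q'_n satisfy α' > α. (In the paper's notation, with k(N−1) = k', l(N−1) = l', this says α(N−1) > α(N).) -/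
/-!
Since `k n * l n ≥ 2`, the denominators satisfy `2 ^ n ≤ q n`, so both series are dominated by a
geometric series (`two_pow_le_qseq`, `summable_inv_qseq`). The recursion is monotone in `k` and `l`,
so `q' n ≤ q n` for every `n` (`qseq_mono`), and `k' 0 < k 0` gives `q' 1 < q 1`. Termwise comparison
with one strict inequality yields the strict inequality of the sums.
-/

/-- `q_0 = 1`, `q_{n+1} = k_n * l_n * q_n ^ 2`. -/
def qseq (k l : ℕ → ℕ) : ℕ → ℕ
  | 0 => 1
  | n + 1 => k n * l n * (qseq k l n) ^ 2

theorem two_pow_le_qseq (k l : ℕ → ℕ) (hk : ∀ n, 2 ≤ k n) (hl : ∀ n, 1 ≤ l n) (n : ℕ) :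
    2 ^ n ≤ qseq k l n := by
  induction n with
  | zero => simp [qseq]
  | succ n ih =>
    calc 2 ^ (n + 1) = 2 * 1 * 2 ^ n := by ring
      _ ≤ k n * l n * qseq k l n ^ 2 :=
        Nat.mul_le_mul (Nat.mul_le_mul (hk n) (hl n)) (ih.trans (Nat.le_self_pow two_ne_zero _))

theorem qseq_mono (k k' l l' : ℕ → ℕ) (hkk : ∀ n, k' n ≤ k n) (hll : ∀ n, l' n ≤ l n) (n : ℕ) :
    qseq k' l' n ≤ qseq k l n := by
  induction n with
  | zero => simp [qseq]
  | succ n ih =>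
    exact Nat.mul_le_mul (Nat.mul_le_mul (hkk n) (hll n)) (Nat.pow_le_pow_left ih 2)

theorem summable_inv_qseq (k l : ℕ → ℕ) (hk : ∀ n, 2 ≤ k n) (hl : ∀ n, 1 ≤ l n) :
    Summable (fun n : ℕ => (1 : ℝ) / qseq k l (n + 1)) := by
  have hs : Summable (fun n : ℕ => (1 : ℝ) / qseq k l n) := by
    refine Summable.of_nonneg_of_le (fun n => by positivity) (fun n => ?_) summable_geometric_two
    rw [one_div_pow]
    have h : (2 : ℝ) ^ n ≤ qseq k l n := by exact_mod_cast two_pow_le_qseq k l hk hl n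
    exact one_div_le_one_div_of_le (by positivity) h
  exact (summable_nat_add_iff 1).2 hs

/-- comparison of the Liouville numbers `α = Σ 1/q_n` and `α' = Σ 1/q'_n`. -/
theorem stmt_1 (k k' l l' : ℕ → ℕ)
    (hk : ∀ n, 2 ≤ k n) (hk' : ∀ n, 2 ≤ k' n)
    (hl : ∀ n, 1 ≤ l n) (hl' : ∀ n, 1 ≤ l' n)
    (h0 : k' 0 < k 0) (hkk : ∀ n, k' n ≤ k n) (hll : ∀ n, l' n ≤ l n) :
    Summable (fun n : ℕ => (1 : ℝ) / qseq k l (n + 1)) ∧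
    Summable (fun n : ℕ => (1 : ℝ) / qseq k' l' (n + 1)) ∧
    (∑' n : ℕ, (1 : ℝ) / qseq k l (n + 1)) < ∑' n : ℕ, (1 : ℝ) / qseq k' l' (n + 1) := by
  have hs := summable_inv_qseq k l hk hl
  have hs' := summable_inv_qseq k' l' hk' hl'
  have hpos : ∀ n, (0 : ℝ) < qseq k' l' n := fun n => by
    exact_mod_cast (Nat.two_pow_pos n).trans_le (two_pow_le_qseq k' l' hk' hl' n)
  refine ⟨hs, hs', Summable.tsum_lt_tsum (i := 0) (fun n => ?_) ?_ hs hs'⟩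
  · exact one_div_le_one_div_of_le (hpos _)
      (Nat.cast_le.2 (qseq_mono k k' l l' hkk hll (n + 1)))
  · have h : qseq k' l' 1 < qseq k l 1 := by
      simpa [qseq] using Nat.mul_lt_mul_of_lt_of_le h0 (hll 0) (hl 0)
    exact one_div_lt_one_div_of_lt (hpos _) (by exact_mod_cast h)
end

section
/- (Smooth permutations) Let n, m be positive integers, let ε > 0, and let σ be a permutation of Fin n × Fin m. Then there exists φ : ℝ² → ℝ² such that: (a) φ is a C^∞ diffeomorphism of ℝ² (a bijection that is C^∞ with C^∞ inverse); (b) φ preserves Lebesgue measure on ℝ²; (c) φ equals the identity outside a compact subset of the open square (0,1)², in particular on an open neighborhood of the boundary of [0,1]×[0,1]; and (d) the set of points x ∈ [0,1)² for which there exists (i,j) with x ∈ R(i,j) but φ(x) ∉ R(σ(i,j)) has Lebesgue measure at most ε. -/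
/-!
The basic move is a point reflection. For every open rectangle `Q` and compact `C ⊆ Q` there is a
smooth area-preserving diffeomorphism of the plane, supported in a compact subset of `Q`, which is
the reflection through the centre of `Q` on `C` (`exists_flip`). If `Q` is the interior of the union
of two adjacent cells, this reflection exchanges the two cells, and `C` may be chosen to fill them
up to measure `ε`; so the transposition of two adjacent cells can be approximated
(`Approximable.swap_adjacent`). Errors of compositions add up because all maps preserve measure
(`Approximable.mul`), and transpositions of adjacent cells generate all permutations of the grid.

For the reflection, the open unit disc is mapped onto `(-π/4, π/4) × (-1, 1)` by
`(x, y) ↦ (∫₀ˣ √(1 - s²) ds, y / √(1 - x²))`. This map is an odd diffeomorphism with Jacobian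
determinant `1`. On the disc, `twist f` rotates the circle of squared radius `ρ` by the angle
`f ρ`; it preserves area for every smooth `f`, and it has the inverse `twist (-f)`. If `f = π` on
`[0, r]` and `f = 0` on `[s, ∞)` with `r < s < 1`, then `twist f` is `-id` on a smaller disc and the
identity near the unit circle. Conjugated to the rectangle and extended by the identity, it is the
desired map (`exists_model_flip`), and affine maps carry it to all other rectangles.
-/

open MeasureTheory

/-- The rectangle `R(i,j) = [i/n, (i+1)/n) × [j/m, (j+1)/m) ⊆ ℝ²`. -/
def rect (n m : ℕ) (i : Fin n) (j : Fin m) : Set (ℝ × ℝ) :=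
  Set.Ico (((i : ℕ) : ℝ) / (n : ℝ)) ((((i : ℕ) : ℝ) + 1) / (n : ℝ)) ×ˢ
    Set.Ico (((j : ℕ) : ℝ) / (m : ℝ)) ((((j : ℕ) : ℝ) + 1) / (m : ℝ))

section

open Set Real

/-! ### Maps of the plane with prescribed Jacobian determinant -/

/-- `f` is differentiable at `x` with Jacobian determinant `d`. -/
def HasDetAt (f : ℝ × ℝ → ℝ × ℝ) (x : ℝ × ℝ) (d : ℝ) : Prop :=
  ∃ f' : ℝ × ℝ →L[ℝ] ℝ × ℝ, HasFDerivAt f f' x ∧ f'.det = d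

theorem HasDetAt.comp {f g : ℝ × ℝ → ℝ × ℝ} {x : ℝ × ℝ} {d e : ℝ}
    (hg : HasDetAt g (f x) e) (hf : HasDetAt f x d) : HasDetAt (g ∘ f) x (e * d) := by
  obtain ⟨f', hf, rfl⟩ := hf
  obtain ⟨g', hg, rfl⟩ := hg
  refine ⟨g'.comp f', hg.comp x hf, ?_⟩
  simp [ContinuousLinearMap.det, LinearMap.det_comp]

theorem HasDetAt.congr {f g : ℝ × ℝ → ℝ × ℝ} {x : ℝ × ℝ} {d : ℝ}
    (hf : HasDetAt f x d) (h : g =ᶠ[nhds x] f) : HasDetAt g x d := by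
  obtain ⟨f', hf, rfl⟩ := hf
  exact ⟨f', hf.congr_of_eventuallyEq h, rfl⟩

theorem hasDetAt_id (x : ℝ × ℝ) : HasDetAt (fun y => y) x 1 :=
  ⟨ContinuousLinearMap.id ℝ _, hasFDerivAt_id x, by simp [ContinuousLinearMap.det]⟩

/-- Here `a, b` are the partial derivatives of the first component and `c, d` those of the second. -/
theorem hasDetAt_of_partials {f g : ℝ × ℝ → ℝ} {x : ℝ × ℝ} {a b c d : ℝ}
    (hf : HasFDerivAt f (a • ContinuousLinearMap.fst ℝ ℝ ℝ + b • ContinuousLinearMap.snd ℝ ℝ ℝ) x)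
    (hg : HasFDerivAt g (c • ContinuousLinearMap.fst ℝ ℝ ℝ + d • ContinuousLinearMap.snd ℝ ℝ ℝ) x) :
    HasDetAt (fun y => (f y, g y)) x (a * d - b * c) := by
  refine ⟨_, hf.prodMk hg, ?_⟩
  rw [ContinuousLinearMap.det, ← LinearMap.det_toMatrix (Module.Basis.finTwoProd ℝ),
    Matrix.det_fin_two]
  simp [LinearMap.toMatrix_apply]

theorem measurePreserving_of_hasDetAt (φ : (ℝ × ℝ) ≃ (ℝ × ℝ)) (hφ : Continuous φ)
    (h : ∀ x, HasDetAt φ x 1) : MeasurePreserving φ volume volume := by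
  choose f' hf' hdet using h
  refine ⟨hφ.measurable, ?_⟩
  ext s hs
  rw [Measure.map_apply hφ.measurable hs]
  have := lintegral_abs_det_fderiv_eq_addHaar_image volume (hφ.measurable hs)
    (fun x _ => (hf' x).hasFDerivWithinAt) φ.injective.injOn
  rw [Set.image_preimage_eq _ φ.surjective] at this
  simpa [hdet] using this

/-! ### An area-preserving diffeomorphism between a rectangle and the unit disc -/

/-- For `|t| ≤ π / 2` this is `∫₀ˣ √(1 - s²) ds` with `x = sin t`, the signed area under the unit
half circle between `0` and `x`. In this form it is a homeomorphism of the whole line. -/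
noncomputable def stripArea (t : ℝ) : ℝ := t / 2 + sin t * cos t / 2

theorem stripArea_contDiff : ContDiff ℝ (⊤ : ℕ∞) stripArea := by
  unfold stripArea; fun_prop

theorem stripArea_hasDerivAt (t : ℝ) : HasDerivAt stripArea (cos t ^ 2) t := by
  have h := ((hasDerivAt_id t).div_const 2).add
    (((hasDerivAt_sin t).mul (hasDerivAt_cos t)).div_const 2)
  refine h.congr_deriv ?_
  have := sin_sq_add_cos_sq t
  linarith

theorem stripArea_strictMono : StrictMono stripArea := by
  intro a b hab
  -- the difference of the values is `(d + cos (a + b) * sin d) / 2` with `d = b - a`,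
  -- and `|sin d| < d`
  have e : stripArea b - stripArea a = (b - a) / 2 + cos (a + b) * sin (b - a) / 2 := by
    have ha := sin_sq_add_cos_sq a
    have hb := sin_sq_add_cos_sq b
    simp only [stripArea, cos_add, sin_sub]
    linear_combination (-(sin b * cos b) / 2) * ha + (sin a * cos a / 2) * hb
  have h1 : |sin (b - a)| < b - a := by
    have := abs_sin_lt_abs (x := b - a) (sub_pos.2 hab).ne'
    rwa [abs_of_pos (sub_pos.2 hab)] at this
  have h2 : |cos (a + b) * sin (b - a)| ≤ |sin (b - a)| := by
    rw [abs_mul]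
    exact mul_le_of_le_one_left (abs_nonneg _) (abs_cos_le_one _)
  have := neg_abs_le (cos (a + b) * sin (b - a))
  linarith

theorem stripArea_surjective : Function.Surjective stripArea := by
  have hb : ∀ t, |sin t * cos t / 2| ≤ 1 := fun t => by
    rw [abs_div, abs_mul, abs_two]
    have := mul_le_one₀ (abs_sin_le_one t) (abs_nonneg _) (abs_cos_le_one t)
    linarith
  refine stripArea_contDiff.continuous.surjective ?_ ?_
  · refine Filter.tendsto_atTop_mono (f := fun t => t / 2 + (-1)) (fun t => ?_) ?_
    · have := (abs_le.1 (hb t)).1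
      unfold stripArea; linarith
    · exact Filter.tendsto_atTop_add_const_right _ _
        (Filter.tendsto_id.atTop_div_const two_pos)
  · refine Filter.tendsto_atBot_mono (g := stripArea) (f := fun t => t / 2 + 1) (fun t => ?_) ?_
    · have := (abs_le.1 (hb t)).2
      unfold stripArea; linarith
    · exact Filter.tendsto_atBot_add_const_right _ _
        (Filter.tendsto_id.atBot_div_const two_pos)

/-- `stripArea` as a homeomorphism of `ℝ`. -/
noncomputable def stripHomeo : ℝ ≃ₜ ℝ :=
  (stripArea_strictMono.orderIsoOfSurjective _ stripArea_surjective).toHomeomorph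

theorem stripArea_symm (p : ℝ) : stripArea (stripHomeo.symm p) = p :=
  stripHomeo.apply_symm_apply p

theorem symm_stripArea (t : ℝ) : stripHomeo.symm (stripArea t) = t :=
  stripHomeo.symm_apply_apply t

theorem stripArea_mem {t : ℝ} :
    stripArea t ∈ Ioo (-(π / 4)) (π / 4) ↔ t ∈ Ioo (-(π / 2)) (π / 2) := by
  have h1 : stripArea (π / 2) = π / 4 := by simp [stripArea]; ring
  have h2 : stripArea (-(π / 2)) = -(π / 4) := by simp [stripArea]; ring
  rw [← h1, ← show stripArea (-(π / 2)) = -stripArea (π / 2) by rw [h1, h2]]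
  exact and_congr stripArea_strictMono.lt_iff_lt stripArea_strictMono.lt_iff_lt

theorem symm_mem {p : ℝ} (hp : p ∈ Ioo (-(π / 4)) (π / 4)) :
    stripHomeo.symm p ∈ Ioo (-(π / 2)) (π / 2) := by
  rw [← stripArea_mem, stripArea_symm]; exact hp

theorem cos_symm_pos {p : ℝ} (hp : p ∈ Ioo (-(π / 4)) (π / 4)) :
    0 < cos (stripHomeo.symm p) :=
  cos_pos_of_mem_Ioo (symm_mem hp)

theorem symm_contDiffAt {p : ℝ} (hp : p ∈ Ioo (-(π / 4)) (π / 4)) :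
    ContDiffAt ℝ (⊤ : ℕ∞) stripHomeo.symm p :=
  stripHomeo.toOpenPartialHomeomorph.contDiffAt_symm_deriv
    (pow_ne_zero 2 (cos_symm_pos hp).ne') (mem_univ _) (stripArea_hasDerivAt _)
    stripArea_contDiff.contDiffAt

theorem symm_hasDerivAt {p : ℝ} (hp : p ∈ Ioo (-(π / 4)) (π / 4)) :
    HasDerivAt stripHomeo.symm (cos (stripHomeo.symm p) ^ 2)⁻¹ p :=
  stripHomeo.toOpenPartialHomeomorph.hasDerivAt_symm (mem_univ _)
    (pow_ne_zero 2 (cos_symm_pos hp).ne') (stripArea_hasDerivAt _)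

/-- The open rectangle that corresponds to the open unit disc. -/
def modelRect : Set (ℝ × ℝ) := Ioo (-(π / 4)) (π / 4) ×ˢ Ioo (-1) 1

/-- The area-preserving diffeomorphism from `modelRect` onto the open unit disc, inverse to
`toRect`. -/
noncomputable def toDisc (z : ℝ × ℝ) : ℝ × ℝ :=
  (sin (stripHomeo.symm z.1), z.2 * cos (stripHomeo.symm z.1))

/-- The area-preserving diffeomorphism `(x, y) ↦ (∫₀ˣ √(1 - s²) ds, y / √(1 - x²))` from the open
unit disc onto `modelRect`. -/
noncomputable def toRect (z : ℝ × ℝ) : ℝ × ℝ :=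
  (stripArea (arcsin z.1), z.2 / √(1 - z.1 ^ 2))

/-- The squared Euclidean norm; the norm of `ℝ × ℝ` in Mathlib is the sup norm. -/
def normSq (z : ℝ × ℝ) : ℝ := z.1 ^ 2 + z.2 ^ 2

theorem toDisc_normSq_lt {z : ℝ × ℝ} (hz : z ∈ modelRect) : normSq (toDisc z) < 1 := by
  have hc := cos_symm_pos hz.1
  have h2 : z.2 ^ 2 < 1 := by have := hz.2.1; have := hz.2.2; nlinarith
  have := sin_sq_add_cos_sq (stripHomeo.symm z.1)
  simp only [normSq, toDisc]
  nlinarith [mul_lt_mul_of_pos_right h2 (pow_pos hc 2)]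

theorem one_sub_sq_pos {z : ℝ × ℝ} (hz : normSq z < 1) : 0 < 1 - z.1 ^ 2 := by
  unfold normSq at hz; nlinarith [sq_nonneg z.2]

theorem fst_mem {z : ℝ × ℝ} (hz : normSq z < 1) : z.1 ∈ Ioo (-1) 1 := by
  have := one_sub_sq_pos hz
  constructor <;> nlinarith

theorem toRect_mem {z : ℝ × ℝ} (hz : normSq z < 1) : toRect z ∈ modelRect := by
  have h := fst_mem hz
  refine ⟨?_, ?_⟩
  · rw [toRect, stripArea_mem]
    exact ⟨neg_pi_div_two_lt_arcsin.2 h.1, arcsin_lt_pi_div_two.2 h.2⟩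
  · have hs := sqrt_pos.2 (one_sub_sq_pos hz)
    have : |z.2| < √(1 - z.1 ^ 2) := by
      apply lt_sqrt_of_sq_lt
      unfold normSq at hz; rw [sq_abs]; linarith
    rw [abs_lt] at this
    simp only [toRect, mem_Ioo, lt_div_iff₀ hs, div_lt_iff₀ hs]
    constructor <;> linarith [this.1, this.2]

theorem toDisc_toRect {z : ℝ × ℝ} (hz : normSq z < 1) : toDisc (toRect z) = z := by
  have h := fst_mem hz
  have hs := sqrt_pos.2 (one_sub_sq_pos hz)
  ext
  · simp [toDisc, toRect, symm_stripArea, sin_arcsin h.1.le h.2.le]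
  · simp only [toDisc, toRect, symm_stripArea, cos_arcsin]
    field_simp

theorem toRect_toDisc {z : ℝ × ℝ} (hz : z ∈ modelRect) : toRect (toDisc z) = z := by
  have hc := cos_symm_pos hz.1
  have hm := symm_mem hz.1
  ext
  · simp only [toDisc, toRect]
    rw [arcsin_sin hm.1.le hm.2.le, stripArea_symm]
  · simp only [toDisc, toRect]
    rw [← cos_arcsin, arcsin_sin hm.1.le hm.2.le]
    field_simp

theorem toRect_neg (z : ℝ × ℝ) : toRect (-z) = -toRect z := by
  ext
  · simp [toRect, stripArea, arcsin_neg]; ring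
  · simp [toRect, neg_div]

theorem toDisc_contDiffAt {z : ℝ × ℝ} (hz : z ∈ modelRect) :
    ContDiffAt ℝ (⊤ : ℕ∞) toDisc z := by
  have h : ContDiffAt ℝ (⊤ : ℕ∞) (fun w : ℝ × ℝ => stripHomeo.symm w.1) z :=
    (symm_contDiffAt hz.1).comp z contDiffAt_fst
  exact (h.sin).prodMk (contDiffAt_snd.mul h.cos)

theorem toRect_contDiffAt {z : ℝ × ℝ} (hz : normSq z < 1) :
    ContDiffAt ℝ (⊤ : ℕ∞) toRect z := by
  have h := fst_mem hz
  have h1 : ContDiffAt ℝ (⊤ : ℕ∞) (fun w : ℝ × ℝ => arcsin w.1) z :=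
    (contDiffAt_arcsin h.1.ne' h.2.ne).comp z contDiffAt_fst
  refine (stripArea_contDiff.contDiffAt.comp z h1).prodMk (contDiffAt_snd.div ?_ ?_)
  · exact (by fun_prop : ContDiffAt ℝ (⊤ : ℕ∞) (fun w : ℝ × ℝ => 1 - w.1 ^ 2) z).sqrt
      (one_sub_sq_pos hz).ne'
  · exact (sqrt_pos.2 (one_sub_sq_pos hz)).ne'

theorem toDisc_hasDetAt {z : ℝ × ℝ} (hz : z ∈ modelRect) : HasDetAt toDisc z 1 := by
  have hc := cos_symm_pos hz.1
  have h := (symm_hasDerivAt hz.1).comp_hasFDerivAt z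
    (hasFDerivAt_fst (𝕜 := ℝ) (E := ℝ) (F := ℝ) (p := z))
  have h1 := h.sin
  have h2 := (hasFDerivAt_snd (𝕜 := ℝ) (E := ℝ) (F := ℝ) (p := z)).mul h.cos
  set t := stripHomeo.symm z.1
  have := hasDetAt_of_partials (x := z) (a := (cos t)⁻¹) (b := 0)
    (c := -z.2 * sin t * (cos t ^ 2)⁻¹) (d := cos t)
    (h1.congr_fderiv (by ext <;> simp [t]; field_simp))
    (h2.congr_fderiv (by ext <;> simp [t]; field_simp))
  rw [inv_mul_cancel₀ hc.ne', zero_mul, sub_zero] at this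
  exact this

theorem toRect_hasDetAt {z : ℝ × ℝ} (hz : normSq z < 1) : HasDetAt toRect z 1 := by
  -- the chain rule applied to `toDisc ∘ toRect = id`
  have hd : DifferentiableAt ℝ toRect z := (toRect_contDiffAt hz).differentiableAt (by simp)
  have h1 : HasDetAt toRect z _ := ⟨_, hd.hasFDerivAt, rfl⟩
  have h2 := (toDisc_hasDetAt (toRect_mem hz)).comp h1
  have ho : IsOpen {w : ℝ × ℝ | normSq w < 1} :=
    isOpen_lt (by unfold normSq; fun_prop) continuous_const
  have h3 : HasDetAt (fun y => y) z _ := h2.congr (by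
    filter_upwards [ho.mem_nhds hz] with w hw using (toDisc_toRect hw).symm)
  obtain ⟨g, hg, hg'⟩ := h3
  have := hg.unique (hasFDerivAt_id z)
  rw [this, one_mul] at hg'
  rw [← hg'] at h1
  simpa [ContinuousLinearMap.det] using h1

/-! ### Twists of the disc, transported to the rectangle -/

/-- Rotation of each circle `normSq z = ρ` about the origin by the angle `f ρ`. -/
noncomputable def twist (f : ℝ → ℝ) (z : ℝ × ℝ) : ℝ × ℝ :=
  (z.1 * cos (f (normSq z)) - z.2 * sin (f (normSq z)),
    z.1 * sin (f (normSq z)) + z.2 * cos (f (normSq z)))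

theorem normSq_twist (f : ℝ → ℝ) (z : ℝ × ℝ) : normSq (twist f z) = normSq z := by
  have h := sin_sq_add_cos_sq (f (normSq z))
  have : normSq (twist f z) =
      normSq z * (sin (f (normSq z)) ^ 2 + cos (f (normSq z)) ^ 2) := by
    conv_lhs => unfold normSq
    simp only [twist]
    generalize f (normSq z) = t
    simp only [normSq]
    ring
  rw [this, h, mul_one]

theorem twist_neg_twist (f : ℝ → ℝ) (z : ℝ × ℝ) : twist (-f) (twist f z) = z := by
  have h := sin_sq_add_cos_sq (f (normSq z))
  have e := normSq_twist f z
  rw [twist, e]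
  ext
  · simp only [twist, Pi.neg_apply, cos_neg, sin_neg]
    linear_combination z.1 * h
  · simp only [twist, Pi.neg_apply, cos_neg, sin_neg]
    linear_combination z.2 * h

theorem twist_of_eq_zero {f : ℝ → ℝ} {z : ℝ × ℝ} (h : f (normSq z) = 0) : twist f z = z := by
  simp [twist, h]

theorem twist_of_eq_pi {f : ℝ → ℝ} {z : ℝ × ℝ} (h : f (normSq z) = π) : twist f z = -z := by
  ext <;> simp [twist, h]

theorem twist_contDiff {f : ℝ → ℝ} (hf : ContDiff ℝ (⊤ : ℕ∞) f) :
    ContDiff ℝ (⊤ : ℕ∞) (twist f) := by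
  unfold twist normSq; fun_prop

theorem twist_hasDetAt {f : ℝ → ℝ} (hf : ContDiff ℝ (⊤ : ℕ∞) f) (z : ℝ × ℝ) :
    HasDetAt (twist f) z 1 := by
  have hx := hasFDerivAt_fst (𝕜 := ℝ) (E := ℝ) (F := ℝ) (p := z)
  have hy := hasFDerivAt_snd (𝕜 := ℝ) (E := ℝ) (F := ℝ) (p := z)
  have hN : HasFDerivAt normSq ((2 * z.1) • ContinuousLinearMap.fst ℝ ℝ ℝ +
      (2 * z.2) • ContinuousLinearMap.snd ℝ ℝ ℝ) z :=
    ((hx.pow 2).add (hy.pow 2)).congr_fderiv (by ext <;> simp)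
  have hd : DifferentiableAt ℝ f (normSq z) := hf.contDiffAt.differentiableAt (by simp)
  have ht := hd.hasDerivAt.comp_hasFDerivAt z hN
  have h1 := (hx.mul ht.cos).sub (hy.mul ht.sin)
  have h2 := (hx.mul ht.sin).add (hy.mul ht.cos)
  have hcs := sin_sq_add_cos_sq (f (normSq z))
  set g := deriv f (normSq z)
  have := hasDetAt_of_partials (x := z)
    (a := cos (f (normSq z)) - (z.1 * sin (f (normSq z)) + z.2 * cos (f (normSq z))) * (2 * g * z.1))
    (b := -sin (f (normSq z)) - (z.1 * sin (f (normSq z)) + z.2 * cos (f (normSq z))) * (2 * g * z.2))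
    (c := sin (f (normSq z)) + (z.1 * cos (f (normSq z)) - z.2 * sin (f (normSq z))) * (2 * g * z.1))
    (d := cos (f (normSq z)) + (z.1 * cos (f (normSq z)) - z.2 * sin (f (normSq z))) * (2 * g * z.2))
    (h1.congr_fderiv (by ext <;> simp <;> ring))
    (h2.congr_fderiv (by ext <;> simp <;> ring))
  have hone : ∀ x y s c : ℝ, s ^ 2 + c ^ 2 = 1 →
      (c - (x * s + y * c) * (2 * g * x)) * (c + (x * c - y * s) * (2 * g * y)) -
        (-s - (x * s + y * c) * (2 * g * y)) * (s + (x * c - y * s) * (2 * g * x)) = 1 :=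
    fun x y s c h => by linear_combination h
  rw [hone _ _ _ _ hcs] at this
  exact this

open Classical in
/-- `twist f` transported to `modelRect` and extended by the identity. -/
noncomputable def modelMap (f : ℝ → ℝ) (z : ℝ × ℝ) : ℝ × ℝ :=
  if z ∈ modelRect then toRect (twist f (toDisc z)) else z

theorem modelRect_isOpen : IsOpen modelRect := isOpen_Ioo.prod isOpen_Ioo

theorem modelMap_mem {f : ℝ → ℝ} {z : ℝ × ℝ} (hz : z ∈ modelRect) :
    modelMap f z = toRect (twist f (toDisc z)) := by
  simp [modelMap, hz]

theorem modelMap_neg (f : ℝ → ℝ) (z : ℝ × ℝ) : modelMap (-f) (modelMap f z) = z := by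
  by_cases hz : z ∈ modelRect
  · have h1 : normSq (twist f (toDisc z)) < 1 := by
      rw [normSq_twist]; exact toDisc_normSq_lt hz
    rw [modelMap_mem hz, modelMap_mem (toRect_mem h1), toDisc_toRect h1, twist_neg_twist,
      toRect_toDisc hz]
  · simp [modelMap, hz]

/-- `modelMap f` as a bijection, with inverse `modelMap (-f)`. -/
noncomputable def modelEquiv (f : ℝ → ℝ) : (ℝ × ℝ) ≃ (ℝ × ℝ) where
  toFun := modelMap f
  invFun := modelMap (-f)
  left_inv := modelMap_neg f
  right_inv z := by simpa using modelMap_neg (-f) z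

/-- The image in `modelRect` of the closed disc of squared radius `s`. It contains the support of
`modelMap f` if `f` vanishes on `[s, ∞)`. -/
def modelSupport (s : ℝ) : Set (ℝ × ℝ) := toRect '' {z | normSq z ≤ s}

theorem modelSupport_subset {s : ℝ} (hs : s < 1) : modelSupport s ⊆ modelRect := by
  rintro _ ⟨z, hz, rfl⟩
  exact toRect_mem (lt_of_le_of_lt hz hs)

theorem modelSupport_isCompact {s : ℝ} (hs : s < 1) : IsCompact (modelSupport s) := by
  have hN : Continuous normSq := by unfold normSq; fun_prop
  refine IsCompact.image_of_continuousOn ?_ fun z hz =>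
    (toRect_contDiffAt (lt_of_le_of_lt hz hs)).continuousAt.continuousWithinAt
  have hsq : IsCompact (Icc (-1 : ℝ) 1 ×ˢ Icc (-1 : ℝ) 1) := isCompact_Icc.prod isCompact_Icc
  refine hsq.of_isClosed_subset (isClosed_le hN continuous_const) fun z hz => ?_
  have hz : normSq z ≤ s := hz
  unfold normSq at hz
  refine ⟨⟨?_, ?_⟩, ?_, ?_⟩ <;> nlinarith [sq_nonneg z.1, sq_nonneg z.2]

theorem modelMap_eq_self {f : ℝ → ℝ} {s : ℝ} (hf : ∀ t, s ≤ t → f t = 0) {z : ℝ × ℝ}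
    (hz : z ∉ modelSupport s) : modelMap f z = z := by
  by_cases h : z ∈ modelRect
  · have : s < normSq (toDisc z) := by
      by_contra! hle
      exact hz ⟨toDisc z, hle, toRect_toDisc h⟩
    rw [modelMap_mem h, twist_of_eq_zero (hf _ this.le), toRect_toDisc h]
  · simp [modelMap, h]

theorem modelMap_eventuallyEq {f : ℝ → ℝ} {s : ℝ} (hs : s < 1) (hf : ∀ t, s ≤ t → f t = 0)
    {z : ℝ × ℝ} (hz : z ∉ modelRect) : modelMap f =ᶠ[nhds z] fun y => y := by
  have hK := (modelSupport_isCompact hs).isClosed.isOpen_compl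
  filter_upwards [hK.mem_nhds fun h => hz (modelSupport_subset hs h)] with w hw
  exact modelMap_eq_self hf hw

theorem modelMap_eventuallyEq_of_mem (f : ℝ → ℝ) {z : ℝ × ℝ} (hz : z ∈ modelRect) :
    modelMap f =ᶠ[nhds z] toRect ∘ (twist f ∘ toDisc) := by
  filter_upwards [modelRect_isOpen.mem_nhds hz] with w hw using modelMap_mem hw

theorem modelMap_contDiff {f : ℝ → ℝ} {s : ℝ} (hs : s < 1) (hf : ∀ t, s ≤ t → f t = 0)
    (hfs : ContDiff ℝ (⊤ : ℕ∞) f) : ContDiff ℝ (⊤ : ℕ∞) (modelMap f) := by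
  refine contDiff_iff_contDiffAt.2 fun z => ?_
  by_cases hz : z ∈ modelRect
  · have h1 : normSq (twist f (toDisc z)) < 1 := by
      rw [normSq_twist]; exact toDisc_normSq_lt hz
    refine ContDiffAt.congr_of_eventuallyEq ?_ (modelMap_eventuallyEq_of_mem f hz)
    exact (toRect_contDiffAt h1).comp z ((twist_contDiff hfs).contDiffAt.comp z
      (toDisc_contDiffAt hz))
  · exact contDiffAt_id.congr_of_eventuallyEq (modelMap_eventuallyEq hs hf hz)

theorem modelMap_hasDetAt {f : ℝ → ℝ} {s : ℝ} (hs : s < 1) (hf : ∀ t, s ≤ t → f t = 0)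
    (hfs : ContDiff ℝ (⊤ : ℕ∞) f) (z : ℝ × ℝ) : HasDetAt (modelMap f) z 1 := by
  by_cases hz : z ∈ modelRect
  · have h1 : normSq (twist f (toDisc z)) < 1 := by
      rw [normSq_twist]; exact toDisc_normSq_lt hz
    have h2 : HasDetAt (twist f ∘ toDisc) z (1 * 1) :=
      (twist_hasDetAt hfs _).comp (toDisc_hasDetAt hz)
    have h3 : HasDetAt (toRect ∘ (twist f ∘ toDisc)) z (1 * (1 * 1)) :=
      HasDetAt.comp (f := twist f ∘ toDisc) (toRect_hasDetAt h1) h2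
    simp only [mul_one] at h3
    exact h3.congr (modelMap_eventuallyEq_of_mem f hz)
  · exact (hasDetAt_id z).congr (modelMap_eventuallyEq hs hf hz)

/-- The point reflection `-id` of `modelRect`, realised on a given compact subset by an
area-preserving diffeomorphism with compact support in `modelRect`. -/
theorem exists_model_flip {C : Set (ℝ × ℝ)} (hC : IsCompact C) (hCQ : C ⊆ modelRect) :
    ∃ φ : (ℝ × ℝ) ≃ (ℝ × ℝ), ContDiff ℝ (⊤ : ℕ∞) φ ∧ ContDiff ℝ (⊤ : ℕ∞) φ.symm ∧
      (∀ x, HasDetAt φ x 1) ∧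
      (∃ K : Set (ℝ × ℝ), IsCompact K ∧ K ⊆ modelRect ∧ ∀ x ∉ K, φ x = x) ∧
      ∀ x ∈ C, φ x = -x := by
  have hN : Continuous normSq := by unfold normSq; fun_prop
  -- a radius `r < 1` such that the disc of squared radius `r` covers the image of `C`
  obtain ⟨r, hr1, hr⟩ : ∃ r < 1, ∀ x ∈ C, normSq (toDisc x) ≤ r := by
    rcases C.eq_empty_or_nonempty with rfl | hne
    · exact ⟨0, one_pos, by simp⟩
    · obtain ⟨y, hy, hmax⟩ := hC.exists_isMaxOn hne (f := fun x => normSq (toDisc x))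
        (fun x hx => (hN.continuousAt.comp
          (toDisc_contDiffAt (hCQ hx)).continuousAt).continuousWithinAt)
      exact ⟨_, toDisc_normSq_lt (hCQ hy), fun x hx => hmax hx⟩
  obtain ⟨s, hrs, hs⟩ := exists_between hr1
  have hd : 0 < s - r := sub_pos.2 hrs
  -- a smooth cutoff equal to `π` on `(-∞, r]` and to `0` on `[s, ∞)`
  let f : ℝ → ℝ := fun t => π * smoothTransition ((s - t) / (s - r))
  have hfs : ContDiff ℝ (⊤ : ℕ∞) f := by
    refine contDiff_const.mul (smoothTransition.contDiff.comp ?_)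
    fun_prop
  have hf0 : ∀ t, s ≤ t → f t = 0 := fun t ht => by
    simp only [f]
    rw [smoothTransition.zero_of_nonpos (div_nonpos_of_nonpos_of_nonneg (by linarith) hd.le),
      mul_zero]
  have hf1 : ∀ t, t ≤ r → f t = π := fun t ht => by
    simp only [f]
    rw [smoothTransition.one_of_one_le ((one_le_div hd).2 (by linarith)), mul_one]
  refine ⟨modelEquiv f, modelMap_contDiff hs hf0 hfs,
    modelMap_contDiff (f := -f) hs (fun t ht => by simp [hf0 t ht]) hfs.neg,
    modelMap_hasDetAt hs hf0 hfs,
    ⟨modelSupport s, modelSupport_isCompact hs, modelSupport_subset hs,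
      fun x hx => modelMap_eq_self hf0 hx⟩, fun x hx => ?_⟩
  change modelMap f x = -x
  rw [modelMap_mem (hCQ hx), twist_of_eq_pi (hf1 _ (hr x hx)), toRect_neg, toRect_toDisc (hCQ hx)]

/-- The affine map that sends `(β, δ)` to the origin and scales the axes by `α` and `γ`. -/
noncomputable def scaling {α γ : ℝ} (hα : α ≠ 0) (hγ : γ ≠ 0) (β δ : ℝ) : (ℝ × ℝ) ≃ (ℝ × ℝ) where
  toFun z := (α * (z.1 - β), γ * (z.2 - δ))
  invFun z := (α⁻¹ * z.1 + β, γ⁻¹ * z.2 + δ)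
  left_inv z := by ext <;> simp <;> field_simp <;> ring
  right_inv z := by ext <;> simp <;> field_simp

/-- The point reflection of an arbitrary open rectangle, realised on a given compact subset by an
area-preserving diffeomorphism with compact support in the rectangle. -/
theorem exists_flip {a b c d : ℝ} (hab : a < b) (hcd : c < d) {C : Set (ℝ × ℝ)}
    (hC : IsCompact C) (hCQ : C ⊆ Ioo a b ×ˢ Ioo c d) :
    ∃ φ : (ℝ × ℝ) ≃ (ℝ × ℝ), ContDiff ℝ (⊤ : ℕ∞) φ ∧ ContDiff ℝ (⊤ : ℕ∞) φ.symm ∧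
      MeasurePreserving φ volume volume ∧
      (∃ K : Set (ℝ × ℝ), IsCompact K ∧ K ⊆ Ioo a b ×ˢ Ioo c d ∧ ∀ x ∉ K, φ x = x) ∧
      ∀ x ∈ C, φ x = (a + b - x.1, c + d - x.2) := by
  have h1 : 0 < b - a := sub_pos.2 hab
  have h2 : 0 < d - c := sub_pos.2 hcd
  have hα : 0 < π / 2 / (b - a) := by positivity
  have hγ : 0 < 2 / (d - c) := by positivity
  -- `A` maps the given rectangle onto `modelRect`
  obtain ⟨A, hA⟩ : ∃ A, A = scaling hα.ne' hγ.ne' ((a + b) / 2) ((c + d) / 2) := ⟨_, rfl⟩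
  have hA1 : ContDiff ℝ (⊤ : ℕ∞) A := by
    subst hA; simp only [scaling, Equiv.coe_fn_mk]; fun_prop
  have hA2 : ContDiff ℝ (⊤ : ℕ∞) A.symm := by
    subst hA; simp only [scaling, Equiv.coe_fn_symm_mk]; fun_prop
  have hAd : ∀ x, HasDetAt A x (π / 2 / (b - a) * (2 / (d - c))) := fun x => by
    have := hasDetAt_of_partials (x := x) (a := π / 2 / (b - a)) (b := 0) (c := 0)
      (d := 2 / (d - c))
      (((hasFDerivAt_fst.sub_const ((a + b) / 2)).const_mul (π / 2 / (b - a))).congr_fderiv (by simp))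
      (((hasFDerivAt_snd.sub_const ((c + d) / 2)).const_mul (2 / (d - c))).congr_fderiv (by simp))
    simp only [mul_zero, sub_zero] at this
    subst hA
    exact this
  have hAd' : ∀ x, HasDetAt A.symm x ((π / 2 / (b - a))⁻¹ * (2 / (d - c))⁻¹) := fun x => by
    have := hasDetAt_of_partials (x := x) (a := (π / 2 / (b - a))⁻¹) (b := 0) (c := 0)
      (d := (2 / (d - c))⁻¹)
      (((hasFDerivAt_fst.const_mul (π / 2 / (b - a))⁻¹).add_const ((a + b) / 2)).congr_fderiv (by simp))
      (((hasFDerivAt_snd.const_mul (2 / (d - c))⁻¹).add_const ((c + d) / 2)).congr_fderiv (by simp))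
    simp only [mul_zero, sub_zero] at this
    subst hA
    exact this
  have hAQ : ∀ x, A x ∈ modelRect ↔ x ∈ Ioo a b ×ˢ Ioo c d := fun x => by
    have e1 : π / 4 = π / 2 / (b - a) * ((b - a) / 2) := by field_simp; norm_num
    have e2 : (1 : ℝ) = 2 / (d - c) * ((d - c) / 2) := by field_simp
    subst hA
    simp only [scaling, modelRect, Equiv.coe_fn_mk, mem_prod, mem_Ioo]
    rw [e1, e2, ← mul_neg, ← mul_neg, mul_lt_mul_iff_right₀ hα, mul_lt_mul_iff_right₀ hα,
      mul_lt_mul_iff_right₀ hγ, mul_lt_mul_iff_right₀ hγ]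
    constructor <;> rintro ⟨⟨_, _⟩, _, _⟩ <;> refine ⟨⟨?_, ?_⟩, ?_, ?_⟩ <;> linarith
  have hAneg : ∀ x, A.symm (-A x) = (a + b - x.1, c + d - x.2) := fun x => by
    rw [Equiv.symm_apply_eq]
    subst hA
    ext <;> simp only [scaling, Equiv.coe_fn_mk, Prod.fst_neg, Prod.snd_neg] <;> ring
  obtain ⟨φ, hφ1, hφ2, hφd, ⟨K, hK, hKQ, hφK⟩, hφC⟩ := exists_model_flip
    (hC.image hA1.continuous) (by rintro _ ⟨x, hx, rfl⟩; exact (hAQ x).2 (hCQ hx))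
  have s1 : ContDiff ℝ (⊤ : ℕ∞) (A.trans (φ.trans A.symm)) := hA2.comp (hφ1.comp hA1)
  have s2 : ContDiff ℝ (⊤ : ℕ∞) (A.trans (φ.trans A.symm)).symm := hA2.comp (hφ2.comp hA1)
  refine ⟨A.trans (φ.trans A.symm), s1, s2,
    measurePreserving_of_hasDetAt _ s1.continuous fun x => ?_,
    ⟨A.symm '' K, hK.image hA2.continuous, ?_, fun x hx => ?_⟩, fun x hx => ?_⟩
  · have h3 := HasDetAt.comp (f := φ ∘ A) (hAd' (φ (A x))) ((hφd (A x)).comp (hAd x))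
    have e : (π / 2 / (b - a))⁻¹ * (2 / (d - c))⁻¹ * (1 * (π / 2 / (b - a) * (2 / (d - c)))) = 1 := by
      field_simp
    rw [e] at h3
    exact h3
  · rintro _ ⟨y, hy, rfl⟩
    rw [← hAQ, A.apply_symm_apply]
    exact hKQ hy
  · have : A x ∉ K := fun h => hx ⟨A x, h, A.symm_apply_apply x⟩
    simp [hφK _ this]
  · simp only [Equiv.trans_apply]
    rw [hφC _ (mem_image_of_mem _ hx), hAneg]

/-! ### Permutations of the cells -/

/-- The points of the cells that `φ` does not send into the cell prescribed by `σ`. -/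
def badSet {n m : ℕ} (φ : ℝ × ℝ → ℝ × ℝ) (σ : Equiv.Perm (Fin n × Fin m)) : Set (ℝ × ℝ) :=
  {x | ∃ p : Fin n × Fin m, x ∈ rect n m p.1 p.2 ∧ φ x ∉ rect n m (σ p).1 (σ p).2}

/-- `σ` is approximated, up to arbitrarily small measure, by area-preserving diffeomorphisms with
compact support in the open unit square. -/
def Approximable {n m : ℕ} (σ : Equiv.Perm (Fin n × Fin m)) : Prop :=
  ∀ ε : ENNReal, 0 < ε → ∃ φ : (ℝ × ℝ) ≃ (ℝ × ℝ),
    ContDiff ℝ (⊤ : ℕ∞) φ ∧ ContDiff ℝ (⊤ : ℕ∞) φ.symm ∧ MeasurePreserving φ volume volume ∧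
    (∃ K : Set (ℝ × ℝ), IsCompact K ∧ K ⊆ Ioo (0 : ℝ) 1 ×ˢ Ioo (0 : ℝ) 1 ∧ ∀ x ∉ K, φ x = x) ∧
    volume (badSet φ σ) ≤ ε

theorem Approximable.one {n m : ℕ} : Approximable (1 : Equiv.Perm (Fin n × Fin m)) := by
  intro ε _
  refine ⟨Equiv.refl _, contDiff_id, contDiff_id, MeasurePreserving.id _,
    ⟨∅, isCompact_empty, empty_subset _, fun _ _ => rfl⟩, ?_⟩
  have : badSet (Equiv.refl (ℝ × ℝ)) (1 : Equiv.Perm (Fin n × Fin m)) = ∅ := by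
    ext x; simp [badSet]
  rw [this, measure_empty]
  exact zero_le

theorem Approximable.mul {n m : ℕ} {σ τ : Equiv.Perm (Fin n × Fin m)} (hσ : Approximable σ)
    (hτ : Approximable τ) : Approximable (σ * τ) := by
  intro ε hε
  obtain ⟨φ, a1, a2, a3, ⟨K, hK, hKQ, hφK⟩, a4⟩ := hσ (ε / 2) (ENNReal.half_pos hε.ne')
  obtain ⟨ψ, b1, b2, b3, ⟨L, hL, hLQ, hψL⟩, b4⟩ := hτ (ε / 2) (ENNReal.half_pos hε.ne')
  refine ⟨ψ.trans φ, a1.comp b1, b2.comp a2, a3.comp b3,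
    ⟨K ∪ L, hK.union hL, union_subset hKQ hLQ, fun x hx => ?_⟩, ?_⟩
  · rw [mem_union, not_or] at hx
    simp [hψL x hx.2, hφK x hx.1]
  · have hsub : badSet (ψ.trans φ) (σ * τ) ⊆ badSet ψ τ ∪ ψ ⁻¹' badSet φ σ := by
      rintro x ⟨p, hp, hx⟩
      by_cases h : ψ x ∈ rect n m (τ p).1 (τ p).2
      · exact Or.inr ⟨τ p, h, hx⟩
      · exact Or.inl ⟨p, hp, h⟩
    calc volume (badSet (ψ.trans φ) (σ * τ))
        ≤ volume (badSet ψ τ) + volume (ψ ⁻¹' badSet φ σ) :=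
          (measure_mono hsub).trans (measure_union_le _ _)
      _ ≤ ε / 2 + ε / 2 := add_le_add b4 ((b3.measure_preimage_le _).trans a4)
      _ = ε := ENNReal.add_halves ε

/-- The interior of `rect n m i j`. -/
def openRect (n m : ℕ) (i : Fin n) (j : Fin m) : Set (ℝ × ℝ) :=
  Ioo (((i : ℕ) : ℝ) / (n : ℝ)) ((((i : ℕ) : ℝ) + 1) / (n : ℝ)) ×ˢ
    Ioo (((j : ℕ) : ℝ) / (m : ℝ)) ((((j : ℕ) : ℝ) + 1) / (m : ℝ))

theorem openRect_subset_rect {n m : ℕ} (i : Fin n) (j : Fin m) :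
    openRect n m i j ⊆ rect n m i j :=
  prod_mono Ioo_subset_Ico_self Ioo_subset_Ico_self

theorem openRect_ae_eq_rect {n m : ℕ} (i : Fin n) (j : Fin m) :
    openRect n m i j =ᵐ[volume] rect n m i j :=
  Measure.set_prod_ae_eq Ioo_ae_eq_Ico Ioo_ae_eq_Ico

theorem openRect_measure_ne_top {n m : ℕ} (i : Fin n) (j : Fin m) :
    volume (openRect n m i j) ≠ ⊤ := by
  rw [openRect, Measure.volume_eq_prod, Measure.prod_prod]
  exact ENNReal.mul_ne_top (by simp) (by simp)

/-- Distinct cells are disjoint. -/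
theorem rect_injective {n m : ℕ} (hn : 0 < n) (hm : 0 < m) {k l : Fin n × Fin m} {x : ℝ × ℝ}
    (hk : x ∈ rect n m k.1 k.2) (hl : x ∈ rect n m l.1 l.2) : k = l := by
  have hn' : (0 : ℝ) < n := by exact_mod_cast hn
  have hm' : (0 : ℝ) < m := by exact_mod_cast hm
  obtain ⟨⟨hx1, hx2⟩, hx3, hx4⟩ := hk
  obtain ⟨⟨hy1, hy2⟩, hy3, hy4⟩ := hl
  have i1 := (div_lt_div_iff_of_pos_right hn').1 (hx1.trans_lt hy2)
  have i2 := (div_lt_div_iff_of_pos_right hn').1 (hy1.trans_lt hx2)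
  have i3 := (div_lt_div_iff_of_pos_right hm').1 (hx3.trans_lt hy4)
  have i4 := (div_lt_div_iff_of_pos_right hm').1 (hy3.trans_lt hx4)
  norm_cast at i1 i2 i3 i4
  simp only [Prod.ext_iff, Fin.ext_iff]
  omega

/-- The two cells share an edge, so the interior of their union is a rectangle whose point
reflection exchanges them. -/
theorem Approximable.swap_adjacent {n m : ℕ} (hn : 0 < n) (hm : 0 < m) {p q : Fin n × Fin m}
    (h : ((q.1 : ℕ) = p.1 + 1 ∧ q.2 = p.2) ∨ (q.1 = p.1 ∧ (q.2 : ℕ) = p.2 + 1)) :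
    Approximable (Equiv.swap p q) := by
  intro ε hε
  have hn' : (0 : ℝ) < n := by exact_mod_cast hn
  have hm' : (0 : ℝ) < m := by exact_mod_cast hm
  have h1 : (p.1 : ℕ) ≤ q.1 := by rcases h with h | h <;> [omega; simp [h.1]]
  have h2 : (p.2 : ℕ) ≤ q.2 := by rcases h with h | h <;> [simp [h.2]; omega]
  have h1' : ((p.1 : ℕ) : ℝ) ≤ (q.1 : ℕ) := by exact_mod_cast h1
  have h2' : ((p.2 : ℕ) : ℝ) ≤ (q.2 : ℕ) := by exact_mod_cast h2
  -- `Q = (a, b) × (c, d)` is the interior of the union of the two cells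
  obtain ⟨a, ha⟩ : ∃ a : ℝ, a = ((p.1 : ℕ) : ℝ) / n := ⟨_, rfl⟩
  obtain ⟨b, hb⟩ : ∃ b : ℝ, b = (((q.1 : ℕ) : ℝ) + 1) / n := ⟨_, rfl⟩
  obtain ⟨c, hc⟩ : ∃ c : ℝ, c = ((p.2 : ℕ) : ℝ) / m := ⟨_, rfl⟩
  obtain ⟨d, hd⟩ : ∃ d : ℝ, d = (((q.2 : ℕ) : ℝ) + 1) / m := ⟨_, rfl⟩
  have hab : a < b := by
    rw [ha, hb]; exact div_lt_div_of_pos_right (by linarith) hn'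
  have hcd : c < d := by
    rw [hc, hd]; exact div_lt_div_of_pos_right (by linarith) hm'
  have hQ1 : Ioo a b ×ˢ Ioo c d ⊆ Ioo (0 : ℝ) 1 ×ˢ Ioo (0 : ℝ) 1 := by
    have e1 : ((q.1 : ℕ) : ℝ) + 1 ≤ n := by exact_mod_cast q.1.isLt
    have e2 : ((q.2 : ℕ) : ℝ) + 1 ≤ m := by exact_mod_cast q.2.isLt
    refine prod_mono (Ioo_subset_Ioo ?_ ?_) (Ioo_subset_Ioo ?_ ?_)
    · rw [ha]; positivity
    · rw [hb]; exact (div_le_one hn').2 e1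
    · rw [hc]; positivity
    · rw [hd]; exact (div_le_one hm').2 e2
  -- the only cells meeting `Q` are the cells of `p` and `q`
  have hcells : ∀ k : Fin n × Fin m, ∀ x ∈ rect n m k.1 k.2, x ∈ Ioo a b ×ˢ Ioo c d →
      k = p ∨ k = q := by
    rintro k x ⟨⟨hx1, hx2⟩, hx3, hx4⟩ ⟨⟨hy1, hy2⟩, hy3, hy4⟩
    rw [ha] at hy1
    rw [hb] at hy2
    rw [hc] at hy3
    rw [hd] at hy4
    have i1 := (div_lt_div_iff_of_pos_right hn').1 (hx1.trans_lt hy2)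
    have i2 := (div_lt_div_iff_of_pos_right hn').1 (hy1.trans hx2)
    have i3 := (div_lt_div_iff_of_pos_right hm').1 (hx3.trans_lt hy4)
    have i4 := (div_lt_div_iff_of_pos_right hm').1 (hy3.trans hx4)
    norm_cast at i1 i2 i3 i4
    simp only [Prod.ext_iff, Fin.ext_iff] at h ⊢
    omega
  -- the point reflection of `Q` exchanges the two open cells
  have hpq : ∀ x ∈ openRect n m p.1 p.2, (a + b - x.1, c + d - x.2) ∈ openRect n m q.1 q.2 := by
    rintro x ⟨⟨hx1, hx2⟩, hx3, hx4⟩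
    simp only [openRect, mem_prod, mem_Ioo, ha, hb, hc, hd]
    rw [add_div] at hx2 hx4 ⊢
    rw [add_div]
    refine ⟨⟨?_, ?_⟩, ?_, ?_⟩ <;> linarith
  have hqp : ∀ x ∈ openRect n m q.1 q.2, (a + b - x.1, c + d - x.2) ∈ openRect n m p.1 p.2 := by
    rintro x ⟨⟨hx1, hx2⟩, hx3, hx4⟩
    simp only [openRect, mem_prod, mem_Ioo, ha, hb, hc, hd]
    rw [add_div] at hx2 hx4 ⊢
    rw [add_div, add_div, add_div]
    refine ⟨⟨?_, ?_⟩, ?_, ?_⟩ <;> linarith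
  have hpQ : openRect n m p.1 p.2 ⊆ Ioo a b ×ˢ Ioo c d := by
    refine prod_mono (Ioo_subset_Ioo ha.le ?_) (Ioo_subset_Ioo hc.le ?_)
    · rw [hb]; exact div_le_div_of_nonneg_right (by linarith) hn'.le
    · rw [hd]; exact div_le_div_of_nonneg_right (by linarith) hm'.le
  have hqQ : openRect n m q.1 q.2 ⊆ Ioo a b ×ˢ Ioo c d := by
    refine prod_mono (Ioo_subset_Ioo ?_ hb.ge) (Ioo_subset_Ioo ?_ hd.ge)
    · rw [ha]; exact div_le_div_of_nonneg_right (by linarith) hn'.le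
    · rw [hc]; exact div_le_div_of_nonneg_right (by linarith) hm'.le
  -- `W` is the union of the two cells up to a null set, and `C` fills `W` up to measure `ε`
  obtain ⟨W, hW⟩ : ∃ W, W = openRect n m p.1 p.2 ∪ openRect n m q.1 q.2 := ⟨_, rfl⟩
  have hWm : MeasurableSet W := by
    rw [hW]
    exact (measurableSet_Ioo.prod measurableSet_Ioo).union
      (measurableSet_Ioo.prod measurableSet_Ioo)
  have hWt : volume W ≠ ⊤ := by
    rw [hW]
    exact measure_union_ne_top (openRect_measure_ne_top _ _) (openRect_measure_ne_top _ _)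
  have hWae : (rect n m p.1 p.2 ∪ rect n m q.1 q.2 : Set (ℝ × ℝ)) =ᵐ[volume] W := by
    rw [hW]
    exact (ae_eq_set_union (openRect_ae_eq_rect _ _) (openRect_ae_eq_rect _ _)).symm
  obtain ⟨C, hCW, hC, hCε⟩ := hWm.exists_isCompact_sdiff_lt hWt hε.ne'
  obtain ⟨φ, f1, f2, f3, ⟨K, hK, hKQ, hφK⟩, hφC⟩ := exists_flip hab hcd hC
    (hCW.trans (by rw [hW]; exact union_subset hpQ hqQ))
  refine ⟨φ, f1, f2, f3, ⟨K, hK, hKQ.trans hQ1, hφK⟩, ?_⟩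
  have hsub : badSet φ (Equiv.swap p q) ⊆ (rect n m p.1 p.2 ∪ rect n m q.1 q.2) \ C := by
    rintro x ⟨k, hk, hx⟩
    have hkpq : k = p ∨ k = q := by
      by_contra! hne
      have hxK : x ∉ K := fun hxK => by
        rcases hcells k x hk (hKQ hxK) with h | h
        exacts [hne.1 h, hne.2 h]
      rw [hφK x hxK, Equiv.swap_apply_of_ne_of_ne hne.1 hne.2] at hx
      exact hx hk
    refine ⟨by rcases hkpq with rfl | rfl <;> [exact Or.inl hk; exact Or.inr hk], fun hxC => ?_⟩
    have hxW := hCW hxC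
    rw [hφC x hxC] at hx
    rw [hW] at hxW
    rcases hxW with hxp | hxq
    · obtain rfl := rect_injective hn hm hk (openRect_subset_rect _ _ hxp)
      rw [Equiv.swap_apply_left] at hx
      exact hx (openRect_subset_rect _ _ (hpq x hxp))
    · obtain rfl := rect_injective hn hm hk (openRect_subset_rect _ _ hxq)
      rw [Equiv.swap_apply_right] at hx
      exact hx (openRect_subset_rect _ _ (hqp x hxq))
  calc volume (badSet φ (Equiv.swap p q))
      ≤ volume ((rect n m p.1 p.2 ∪ rect n m q.1 q.2) \ C) := measure_mono hsub
    _ = volume (W \ C) := measure_congr (hWae.diff (Filter.EventuallyEq.refl _ _))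
    _ ≤ ε := hCε.le

theorem Approximable.swap_trans {n m : ℕ} {p q r : Fin n × Fin m}
    (hpq : Approximable (Equiv.swap p q)) (hqr : Approximable (Equiv.swap q r)) :
    Approximable (Equiv.swap p r) := by
  by_cases h1 : p = q
  · rwa [h1]
  by_cases h2 : p = r
  · rw [h2, Equiv.swap_self]
    exact Approximable.one
  rw [Equiv.swap_comm p r, ← Equiv.swap_mul_swap_mul_swap h1 h2]
  exact (hqr.mul hpq).mul hqr

/-- Every cell is joined to the cell `(0, 0)` by a chain of adjacent cells, first along the bottom
row and then up a column. -/
theorem Approximable.swap_origin {n m : ℕ} (hn : 0 < n) (hm : 0 < m) (p : Fin n × Fin m) :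
    Approximable (Equiv.swap (⟨0, hn⟩, ⟨0, hm⟩) p) := by
  have hrow : ∀ i (hi : i < n),
      Approximable (Equiv.swap ((⟨0, hn⟩, ⟨0, hm⟩) : Fin n × Fin m) (⟨i, hi⟩, ⟨0, hm⟩)) := by
    intro i
    induction i with
    | zero => intro _; rw [Equiv.swap_self]; exact Approximable.one
    | succ i ih =>
      intro hi
      exact (ih (by omega)).swap_trans (Approximable.swap_adjacent hn hm (Or.inl ⟨rfl, rfl⟩))
  have hcol : ∀ j (hj : j < m),
      Approximable (Equiv.swap ((⟨0, hn⟩, ⟨0, hm⟩) : Fin n × Fin m) (p.1, ⟨j, hj⟩)) := by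
    intro j
    induction j with
    | zero => intro _; exact hrow p.1 p.1.isLt
    | succ j ih =>
      intro hj
      exact (ih (by omega)).swap_trans (Approximable.swap_adjacent hn hm (Or.inr ⟨rfl, rfl⟩))
  exact hcol p.2 p.2.isLt

theorem approximable_all {n m : ℕ} (hn : 0 < n) (hm : 0 < m) (σ : Equiv.Perm (Fin n × Fin m)) :
    Approximable σ := by
  induction σ using Equiv.Perm.swap_induction_on with
  | one => exact Approximable.one
  | swap_mul f x y _ ih =>
    have hx := Approximable.swap_origin hn hm x
    rw [Equiv.swap_comm] at hx
    exact (hx.swap_trans (Approximable.swap_origin hn hm y)).mul ih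

end

/-- Smooth permutations: a permutation of the rectangles of
`I_n ⊗ I_m` can be approximated by a measure-preserving `C^∞` diffeomorphism of `ℝ²`
which is the identity outside a compact subset of the open unit square and moves
all but a set of measure `≤ ε` of each rectangle into its image rectangle. -/
theorem stmt_4 (n m : ℕ) (hn : 0 < n) (hm : 0 < m) (ε : ℝ) (hε : 0 < ε)
    (σ : Equiv.Perm (Fin n × Fin m)) :
    ∃ φ : (ℝ × ℝ) ≃ (ℝ × ℝ),
      ContDiff ℝ (⊤ : ℕ∞) ⇑φ ∧ ContDiff ℝ (⊤ : ℕ∞) ⇑φ.symm ∧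
      MeasurePreserving ⇑φ volume volume ∧
      (∃ K : Set (ℝ × ℝ), IsCompact K ∧ K ⊆ Set.Ioo (0 : ℝ) 1 ×ˢ Set.Ioo (0 : ℝ) 1 ∧
        ∀ x ∉ K, φ x = x) ∧
      volume {x : ℝ × ℝ | x ∈ Set.Ico (0 : ℝ) 1 ×ˢ Set.Ico (0 : ℝ) 1 ∧
          ∃ p : Fin n × Fin m, x ∈ rect n m p.1 p.2 ∧ φ x ∉ rect n m (σ p).1 (σ p).2} ≤
        ENNReal.ofReal ε := by
  obtain ⟨φ, h1, h2, h3, h4, h5⟩ := approximable_all hn hm σ _ (ENNReal.ofReal_pos.2 hε)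
  exact ⟨φ, h1, h2, h3, h4, (measure_mono fun x hx => hx.2).trans h5⟩
end

section
/- Let Σ be a nonempty finite alphabet and ⟨W_n⟩_{n∈ℕ} a sequence of finite sets of finite words in Σ such that for each n: all words of W_n have one common length q_n, W_n has at least 2 elements, and every w ∈ W_n occurs as a contiguous subword of every w' ∈ W_{n+1}. Let K = {x ∈ Σ^ℤ : every finite contiguous subword of x occurs as a contiguous subword of some w ∈ W_n for some n}. Then K is the smallest closed shift-invariant subset of Σ^ℤ having non-empty intersection with the cylinder ⟨w⟩ for every w ∈ ⋃_n W_n; that is: (1) K is closed in the product topology and shift-invariant; (2) K ∩ ⟨w⟩ ≠ ∅ for every w ∈ ⋃_n W_n; and (3) every closed shift-invariant subset K' ⊆ Σ^ℤ satisfying K' ∩ ⟨w⟩ ≠ ∅ for all w ∈ ⋃_n W_n contains K. -/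
/-!
Closedness and shift-invariance hold because membership in `Klim W` is a conjunction of conditions
on finite windows of `x`, and shifting only moves the windows.

For minimality, let `x ∈ Klim W`. The window of `x` on `[-k, k]` occurs in some `w ∈ W n`; a point
of `K' ∩ ⟨w⟩`, shifted forward, then agrees with `x` on `[-k, k]`. Letting `k → ∞` puts `x` in the
closed set `K'`.

For nonemptiness of `Klim W ∩ ⟨w⟩`, the point is that `w` occurs in later words with arbitrarily
large margins on both sides (`Deep.exists_margins`). A word of `W (n + 1)` contains two distinct
words of `W n`, which have equal length and hence occur at different positions. The copy of `w`
inside the later one gains a letter of left margin, and the copy inside the earlier one gains a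
letter of right margin (`Deep.left`, `Deep.right`). Compactness of `A^ℤ` then yields a point all
of whose windows around the central copy of `w` occur in words of the sequence.
-/

/-- The limit set `K` of a construction sequence: all bi-infinite words every finite
contiguous subword of which occurs inside some `w ∈ W_n`. -/
def Klim {A : Type} (W : ℕ → Finset (List A)) : Set (ℤ → A) :=
  {x | ∀ (a : ℤ) (ℓ : ℕ), ∃ n, ∃ w ∈ W n,
    (List.ofFn fun j : Fin ℓ => x (a + ((j : ℕ) : ℤ))) <:+: w}

/-- The shift `sh(x)(n) = x(n+1)` on `A^ℤ`. -/
def shiftZ {A : Type} (x : ℤ → A) : ℤ → A := fun i => x (i + 1)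

/-- The cylinder set of a finite word. -/
def cylZ {A : Type} (w : List A) : Set (ℤ → A) :=
  {x | ∀ j : Fin w.length, x (((j : ℕ) : ℤ)) = w.get j}

theorem ofFn_infix_iff {A : Type} {ℓ : ℕ} (f : Fin ℓ → A) (v : List A) :
    List.ofFn f <:+: v ↔ ∃ p : ℕ, ∀ j : Fin ℓ, v[p + (j : ℕ)]? = some (f j) := by
  constructor
  · rintro ⟨s, t, rfl⟩
    refine ⟨s.length, fun j => ?_⟩
    rw [List.append_assoc, List.getElem?_append_right (by omega), Nat.add_sub_cancel_left,
      List.getElem?_append_left (by simp)]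
    simp
  · rintro ⟨p, hp⟩
    have h : List.ofFn f = (v.drop p).take ℓ := by
      apply List.ext_getElem?
      intro i
      by_cases hi : i < ℓ
      · have := hp ⟨i, hi⟩
        simp [hi, this]
      · simp [hi]
    rw [h]
    exact (List.take_prefix _ _).isInfix.trans (List.drop_suffix _ _).isInfix

/-- Every word of `W n` contains an occurrence of `w` with at least `a` letters before it and at
least `b` letters after it. -/
def Deep {A : Type} (W : ℕ → Finset (List A)) (w : List A) (a b n : ℕ) : Prop :=
  ∀ v ∈ W n, ∃ s t : List A, v = s ++ w ++ t ∧ a ≤ s.length ∧ b ≤ t.length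

/-- Each word of `W (n + 1)` contains two words of `W n` at different positions. -/
theorem exists_two_occurrences {A : Type} {W : ℕ → Finset (List A)} {q : ℕ → ℕ}
    (hlen : ∀ n, ∀ w ∈ W n, w.length = q n) (hcard : ∀ n, 2 ≤ (W n).card)
    (hsub : ∀ n, ∀ w ∈ W n, ∀ w' ∈ W (n + 1), w <:+: w') (n : ℕ) {v : List A}
    (hv : v ∈ W (n + 1)) :
    ∃ u₁ ∈ W n, ∃ u₂ ∈ W n, ∃ s₁ t₁ s₂ t₂ : List A,
      v = s₁ ++ u₁ ++ t₁ ∧ v = s₂ ++ u₂ ++ t₂ ∧ s₁.length < s₂.length ∧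
        t₂.length < t₁.length := by
  obtain ⟨u₁, h₁, u₂, h₂, hne⟩ := Finset.one_lt_card.mp (hcard n)
  obtain ⟨s₁, t₁, e₁⟩ := hsub n u₁ h₁ v hv
  obtain ⟨s₂, t₂, e₂⟩ := hsub n u₂ h₂ v hv
  have l₁ := hlen n u₁ h₁
  have l₂ := hlen n u₂ h₂
  have L₁ := congrArg List.length e₁
  have L₂ := congrArg List.length e₂
  simp only [List.length_append] at L₁ L₂
  rcases lt_trichotomy s₁.length s₂.length with h | h | h
  · exact ⟨u₁, h₁, u₂, h₂, s₁, t₁, s₂, t₂, e₁.symm, e₂.symm, h, by omega⟩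
  · -- equal positions and equal lengths would force the two words to coincide
    have e := e₁.trans e₂.symm
    rw [List.append_assoc, List.append_assoc] at e
    exact absurd (List.append_inj (List.append_inj e h).2 (l₁.trans l₂.symm)).1 hne
  · exact ⟨u₂, h₂, u₁, h₁, s₂, t₂, s₁, t₁, e₂.symm, e₁.symm, h, by omega⟩

theorem Deep.left {A : Type} {W : ℕ → Finset (List A)} {q : ℕ → ℕ}
    (hlen : ∀ n, ∀ w ∈ W n, w.length = q n) (hcard : ∀ n, 2 ≤ (W n).card)
    (hsub : ∀ n, ∀ w ∈ W n, ∀ w' ∈ W (n + 1), w <:+: w') {w : List A} {a b n : ℕ}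
    (h : Deep W w a b n) : Deep W w (a + 1) b (n + 1) := by
  intro v hv
  obtain ⟨_, _, u, hu, _, _, s', t', _, e, hs, _⟩ :=
    exists_two_occurrences hlen hcard hsub n hv
  obtain ⟨s, t, rfl, ha, hb⟩ := h u hu
  refine ⟨s' ++ s, t ++ t', by simp [e], ?_, ?_⟩ <;> simp only [List.length_append] <;> omega

theorem Deep.right {A : Type} {W : ℕ → Finset (List A)} {q : ℕ → ℕ}
    (hlen : ∀ n, ∀ w ∈ W n, w.length = q n) (hcard : ∀ n, 2 ≤ (W n).card)
    (hsub : ∀ n, ∀ w ∈ W n, ∀ w' ∈ W (n + 1), w <:+: w') {w : List A} {a b n : ℕ}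
    (h : Deep W w a b n) : Deep W w a (b + 1) (n + 1) := by
  intro v hv
  obtain ⟨u, hu, _, _, s', t', _, _, e, _, _, ht⟩ :=
    exists_two_occurrences hlen hcard hsub n hv
  obtain ⟨s, t, rfl, ha, hb⟩ := h u hu
  refine ⟨s' ++ s, t ++ t', by simp [e], ?_, ?_⟩ <;> simp only [List.length_append] <;> omega

theorem Deep.exists_margins {A : Type} {W : ℕ → Finset (List A)} {q : ℕ → ℕ}
    (hlen : ∀ n, ∀ w ∈ W n, w.length = q n) (hcard : ∀ n, 2 ≤ (W n).card)
    (hsub : ∀ n, ∀ w ∈ W n, ∀ w' ∈ W (n + 1), w <:+: w') {n : ℕ} {w : List A} (hw : w ∈ W n)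
    (k : ℕ) : ∃ m, Deep W w k k m := by
  induction k with
  | zero =>
    refine ⟨n + 1, fun v hv => ?_⟩
    obtain ⟨s, t, e⟩ := hsub n w hw v hv
    exact ⟨s, t, e.symm, Nat.zero_le _, Nat.zero_le _⟩
  | succ k ih =>
    obtain ⟨m, hm⟩ := ih
    exact ⟨m + 2, (hm.left hlen hcard hsub).right hlen hcard hsub⟩

/-- The points whose window `[a, a + ℓ)` occurs in a word of the sequence. -/
def windowSet {A : Type} (W : ℕ → Finset (List A)) (a : ℤ) (ℓ : ℕ) : Set (ℤ → A) :=
  {x | ∃ n, ∃ w ∈ W n, (List.ofFn fun j : Fin ℓ => x (a + ((j : ℕ) : ℤ))) <:+: w}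

theorem Klim_eq_iInter {A : Type} (W : ℕ → Finset (List A)) :
    Klim W = ⋂ (a : ℤ) (ℓ : ℕ), windowSet W a ℓ := by
  ext x
  simp [Klim, windowSet]

theorem isClosed_windowSet {A : Type} [TopologicalSpace A] [DiscreteTopology A]
    (W : ℕ → Finset (List A)) (a : ℤ) (ℓ : ℕ) : IsClosed (windowSet W a ℓ) := by
  -- the condition factors through the continuous restriction to a finite, hence discrete, power
  have hc : Continuous fun (x : ℤ → A) (j : Fin ℓ) => x (a + ((j : ℕ) : ℤ)) := by fun_prop
  exact (isClosed_discrete {f : Fin ℓ → A | ∃ n, ∃ w ∈ W n, List.ofFn f <:+: w}).preimage hc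

theorem windowSet_mono {A : Type} (W : ℕ → Finset (List A)) {a b : ℤ} {ℓ m : ℕ} (hab : b ≤ a)
    (h : a + ℓ ≤ b + m) : windowSet W b m ⊆ windowSet W a ℓ := by
  rintro x ⟨n, w, hw, hx⟩
  refine ⟨n, w, hw, ?_⟩
  rw [ofFn_infix_iff] at hx ⊢
  obtain ⟨p, hp⟩ := hx
  refine ⟨p + (a - b).toNat, fun j => ?_⟩
  have hj := j.isLt
  have := hp ⟨(a - b).toNat + j, by omega⟩
  rw [Nat.add_assoc, this]
  congr 2
  push_cast
  omega

theorem isClosed_cylZ {A : Type} [TopologicalSpace A] [DiscreteTopology A] (w : List A) :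
    IsClosed (cylZ w) := by
  have : cylZ w = ⋂ j : Fin w.length, {x : ℤ → A | x (((j : ℕ) : ℤ)) = w.get j} := by
    ext x
    simp [cylZ]
  rw [this]
  exact isClosed_iInter fun j => isClosed_eq (continuous_apply _) continuous_const

theorem Klim_inter_cylZ_nonempty {A : Type} [Fintype A] [Nonempty A] [TopologicalSpace A]
    [DiscreteTopology A] {W : ℕ → Finset (List A)} {q : ℕ → ℕ}
    (hlen : ∀ n, ∀ w ∈ W n, w.length = q n) (hcard : ∀ n, 2 ≤ (W n).card)
    (hsub : ∀ n, ∀ w ∈ W n, ∀ w' ∈ W (n + 1), w <:+: w') {n : ℕ} {w : List A} (hw : w ∈ W n) :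
    (Klim W ∩ cylZ w).Nonempty := by
  let C : ℕ → Set (ℤ → A) := fun k => windowSet W (-(k : ℤ)) (2 * k + w.length) ∩ cylZ w
  have hclosed : ∀ k, IsClosed (C k) := fun k =>
    (isClosed_windowSet W _ _).inter (isClosed_cylZ w)
  have hne : ∀ k, (C k).Nonempty := by
    intro k
    obtain ⟨m, hm⟩ := Deep.exists_margins hlen hcard hsub hw k
    obtain ⟨v, hv⟩ : (W m).Nonempty := Finset.card_pos.mp (by have := hcard m; omega)
    obtain ⟨s, t, e, hs, ht⟩ := hm v hv
    have hl : v.length = s.length + w.length + t.length := by simp [e, Nat.add_assoc]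
    obtain ⟨a₀⟩ := ‹Nonempty A›
    -- lay `v` out so that its copy of `w` starts at the origin, with an arbitrary filler outside
    refine ⟨fun i => v.getD (i + s.length).toNat a₀, ⟨m, v, hv, ?_⟩, fun j => ?_⟩
    · rw [ofFn_infix_iff]
      refine ⟨s.length - k, fun j => ?_⟩
      have hj := j.isLt
      have hi : (-(k : ℤ) + ((j : ℕ) : ℤ) + s.length).toNat = s.length - k + j := by omega
      have hlt : s.length - k + (j : ℕ) < v.length := by omega
      simp only [hi]
      simp [List.getD_eq_getElem?_getD, List.getElem?_eq_getElem hlt]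
    · have hi : (((j : ℕ) : ℤ) + s.length).toNat = s.length + j := by omega
      have hg : v[s.length + (j : ℕ)]? = some (w.get j) := by
        rw [e, List.append_assoc, List.getElem?_append_right (by omega), Nat.add_sub_cancel_left,
          List.getElem?_append_left j.isLt]
        simp
      simp only [hi, List.getD_eq_getElem?_getD, hg, Option.getD_some]
  obtain ⟨x, hx⟩ := IsCompact.nonempty_iInter_of_sequence_nonempty_isCompact_isClosed C
    (fun k => Set.inter_subset_inter_left _
      (windowSet_mono W (by push_cast; omega) (by push_cast; omega)))
    hne (hclosed 0).isCompact hclosed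
  rw [Set.mem_iInter] at hx
  refine ⟨x, ?_, (hx 0).2⟩
  rw [Klim_eq_iInter]
  refine Set.mem_iInter₂.mpr fun a ℓ => ?_
  exact windowSet_mono W (by omega) (by omega) (hx (a.natAbs + ℓ)).1

theorem shiftZ_iterate {A : Type} {K : Set (ℤ → A)} (h : shiftZ '' K = K) {y : ℤ → A}
    (hy : y ∈ K) (d : ℕ) : (fun i => y (i + d)) ∈ K := by
  induction d with
  | zero => simpa using hy
  | succ d ih =>
    rw [← h]
    refine ⟨_, ih, ?_⟩
    funext i
    simp only [shiftZ]
    congr 1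
    push_cast
    ring

theorem Klim_subset {A : Type} [TopologicalSpace A] {W : ℕ → Finset (List A)}
    {K' : Set (ℤ → A)} (hK : IsClosed K') (hsh : shiftZ '' K' = K')
    (hmeet : ∀ n, ∀ w ∈ W n, (K' ∩ cylZ w).Nonempty) : Klim W ⊆ K' := by
  intro x hx
  have key : ∀ k : ℕ, ∃ z ∈ K', ∀ i : ℤ, i.natAbs ≤ k → z i = x i := by
    intro k
    obtain ⟨n, w, hw, hin⟩ := hx (-(k : ℤ)) (2 * k + 1)
    obtain ⟨p, hp⟩ := (ofFn_infix_iff _ _).mp hin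
    obtain ⟨y, hy, hc⟩ := hmeet n w hw
    -- position `p` of `w` carries the letter `x (-k)`
    refine ⟨_, shiftZ_iterate hsh hy (p + k), fun i hi => ?_⟩
    have hg := hp ⟨(i + k).toNat, by omega⟩
    obtain ⟨hlt, hg⟩ := List.getElem?_eq_some_iff.mp hg
    have hcy := hc ⟨_, hlt⟩
    rw [List.get_eq_getElem, hg] at hcy
    have e₁ : ((p + (i + k).toNat : ℕ) : ℤ) = i + ((p + k : ℕ) : ℤ) := by omega
    have e₂ : -(k : ℤ) + (((i + k).toNat : ℕ) : ℤ) = i := by omega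
    simp only [e₁, e₂] at hcy
    exact hcy
  choose z hz hzx using key
  refine hK.mem_of_tendsto (f := z) (b := Filter.atTop) ?_ (Filter.Eventually.of_forall hz)
  rw [tendsto_pi_nhds]
  intro i
  apply tendsto_const_nhds.congr'
  filter_upwards [Filter.eventually_ge_atTop i.natAbs] with k hk
  exact (hzx k i hk).symm

theorem shiftZ_image_Klim {A : Type} (W : ℕ → Finset (List A)) :
    shiftZ '' Klim W = Klim W := by
  have hadd : ∀ (x : ℤ → A) (c : ℤ), x ∈ Klim W → (fun i => x (i + c)) ∈ Klim W := by
    intro x c hx a ℓ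
    obtain ⟨n, w, hw, h⟩ := hx (a + c) ℓ
    refine ⟨n, w, hw, ?_⟩
    simpa only [add_right_comm] using h
  apply Set.Subset.antisymm
  · rintro _ ⟨x, hx, rfl⟩
    exact hadd x 1 hx
  · intro x hx
    refine ⟨_, hadd x (-1) hx, ?_⟩
    funext i
    simp [shiftZ]

/-- `K` is the smallest closed shift-invariant subset of `A^ℤ` meeting
every cylinder `⟨w⟩`, `w ∈ ⋃_n W_n`. -/
theorem stmt_8 {A : Type} [Fintype A] [Nonempty A] [TopologicalSpace A] [DiscreteTopology A]
    (W : ℕ → Finset (List A)) (q : ℕ → ℕ)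
    (hlen : ∀ n, ∀ w ∈ W n, w.length = q n)
    (hcard : ∀ n, 2 ≤ (W n).card)
    (hsub : ∀ n, ∀ w ∈ W n, ∀ w' ∈ W (n + 1), w <:+: w') :
    IsClosed (Klim W) ∧
    shiftZ '' Klim W = Klim W ∧
    (∀ n, ∀ w ∈ W n, (Klim W ∩ cylZ w).Nonempty) ∧
    (∀ K' : Set (ℤ → A), IsClosed K' → shiftZ '' K' = K' →
      (∀ n, ∀ w ∈ W n, (K' ∩ cylZ w).Nonempty) → Klim W ⊆ K') := by
  exact ⟨by
      rw [Klim_eq_iInter]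
      exact isClosed_iInter fun a => isClosed_iInter fun ℓ => isClosed_windowSet W a ℓ,
    shiftZ_image_Klim W, fun _ _ hw => Klim_inter_cylZ_nonempty hlen hcard hsub hw,
    fun _ hK hsh hmeet => Klim_subset hK hsh hmeet⟩
end

section
/- Let α ∈ ℝ be irrational and let φ : ℝ/ℤ → ℝ/ℤ be a measurable, Haar-measure-preserving map satisfying φ(x + α) = φ(x) − α for almost every x (i.e. φ conjugates the rotation R_α to its inverse R_{−α}). Then there exists δ ∈ ℝ/ℤ such that φ(x) = −x + δ for almost every x; that is, every measure-theoretic conjugacy between R_α and R_α^{−1} agrees almost everywhere with a map of the form x ↦ −x + δ (multiplicatively, z ↦ z̄·e^{2πiδ} on the unit circle). -/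
open MeasureTheory

/-! The function `x ↦ φ x + x` is invariant under the rotation by `α`, since the two
increments `-α` and `α` cancel. The rotation is ergodic because `α` is irrational, so this
function is almost everywhere equal to a constant `δ`. -/

/-- any measure-theoretic conjugacy between the irrational rotation
`R_α` and its inverse on `ℝ/ℤ` agrees a.e. with a map `x ↦ -x + δ`. -/
theorem stmt_9 (α : ℝ) (hα : Irrational α) (φ : UnitAddCircle → UnitAddCircle)
    (hmeas : Measurable φ)
    (hmp : MeasurePreserving φ volume volume)
    (hconj : ∀ᵐ x : UnitAddCircle ∂volume, φ (x + (α : UnitAddCircle)) = φ x - (α : UnitAddCircle)) :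
    ∃ δ : UnitAddCircle, ∀ᵐ x : UnitAddCircle ∂volume, φ x = -x + δ := by
  have herg : Ergodic (· + (α : UnitAddCircle)) volume := by
    rw [AddCircle.ergodic_add_right, ← AddCircle.denseRange_zsmul_iff,
      AddCircle.denseRange_zsmul_coe_iff]
    simpa using hα
  have hinv : (fun x => φ x + x) ∘ (· + (α : UnitAddCircle)) =ᵐ[volume] fun x => φ x + x := by
    filter_upwards [hconj] with x hx
    simp only [Function.comp_apply, hx]
    abel
  obtain ⟨δ, hδ⟩ := herg.ae_eq_const_of_ae_eq_comp_ae
    (hmeas.add measurable_id).aestronglyMeasurable hinv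
  refine ⟨δ, ?_⟩
  filter_upwards [hδ] with x hx
  exact eq_neg_add_of_add_eq (by simpa [add_comm] using hx)
end
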